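/- arXiv:math/0004153 — 3 statements merged into one kernel-verified Lean document; each statement's English description precedes it below -/
import Mathlib

section
/- Let U ⊆ ℝ² be open and r : U → ℝ³ a C³ immersion with smooth unit normal n (‖n‖ = 1 and ⟨n, ∂_{q^α} r⟩ = 0 for α = 1,2). With second fundamental form coefficients τ_{αβ} = ⟨∂²_{q^β q^α} r, n⟩ and R_{1212} the covariant Riemann–Christoffel curvature component of the induced metric g_{αβ} = ⟨∂_{q^α} r, ∂_{q^β} r⟩, one has R_{1212} = τ_{11} τ_{22} − τ_{12}²; consequently the Gaussian curvature κ = det(τ_{αβ})/det(g_{αβ}) satisfies κ = R_{1212}/det(g_{αβ}). -/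
open scoped RealInnerProductSpace

noncomputable section

/-- Partial derivative of a vector-valued map in the `α`-th coordinate direction. -/
def pdv {M N : ℕ} (f : EuclideanSpace ℝ (Fin M) → EuclideanSpace ℝ (Fin N)) (α : Fin M)
    (x : EuclideanSpace ℝ (Fin M)) : EuclideanSpace ℝ (Fin N) :=
  fderiv ℝ f x (EuclideanSpace.single α 1)

/-- Partial derivative of a scalar-valued map in the `α`-th coordinate direction. -/
def pds {M : ℕ} (f : EuclideanSpace ℝ (Fin M) → ℝ) (α : Fin M)
    (x : EuclideanSpace ℝ (Fin M)) : ℝ :=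
  fderiv ℝ f x (EuclideanSpace.single α 1)

/-- The tangent vectors `g_α = ∂_{q^α} r`. -/
def gvec {M N : ℕ} (r : EuclideanSpace ℝ (Fin M) → EuclideanSpace ℝ (Fin N)) (α : Fin M)
    (x : EuclideanSpace ℝ (Fin M)) : EuclideanSpace ℝ (Fin N) :=
  pdv r α x

/-- The induced metric `g_{αβ} = ⟨g_α, g_β⟩`. -/
def gmat {M N : ℕ} (r : EuclideanSpace ℝ (Fin M) → EuclideanSpace ℝ (Fin N))
    (x : EuclideanSpace ℝ (Fin M)) : Matrix (Fin M) (Fin M) ℝ :=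
  Matrix.of fun α β => ⟪gvec r α x, gvec r β x⟫

/-- The Christoffel symbols of the second kind,
`Γ^γ_{αβ} = Σ_λ g^{γλ} ⟨∂_{q^β} g_α, g_λ⟩`. -/
def Γ2 {M N : ℕ} (r : EuclideanSpace ℝ (Fin M) → EuclideanSpace ℝ (Fin N))
    (γ α β : Fin M) (x : EuclideanSpace ℝ (Fin M)) : ℝ :=
  ∑ lam, (gmat r x)⁻¹ γ lam * ⟪pdv (gvec r α) β x, gvec r lam x⟫

/-- The mixed Riemann–Christoffel curvature
`R^γ_{αδβ} = ∂_{q^δ} Γ^γ_{αβ} - ∂_{q^β} Γ^γ_{αδ} + Σ_λ (Γ^λ_{αβ} Γ^γ_{λδ} - Γ^λ_{αδ} Γ^γ_{λβ})`. -/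
def Rmix {M N : ℕ} (r : EuclideanSpace ℝ (Fin M) → EuclideanSpace ℝ (Fin N))
    (γ α δ β : Fin M) (x : EuclideanSpace ℝ (Fin M)) : ℝ :=
  pds (Γ2 r γ α β) δ x - pds (Γ2 r γ α δ) β x +
    ∑ lam, (Γ2 r lam α β x * Γ2 r γ lam δ x - Γ2 r lam α δ x * Γ2 r γ lam β x)

/-- The covariant curvature `R_{ραδβ} = Σ_γ g_{γρ} R^γ_{αδβ}`. -/
def Rcov {M N : ℕ} (r : EuclideanSpace ℝ (Fin M) → EuclideanSpace ℝ (Fin N))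
    (ρ α δ β : Fin M) (x : EuclideanSpace ℝ (Fin M)) : ℝ :=
  ∑ γ, gmat r x γ ρ * Rmix r γ α δ β x

/-!
Split `∂_β g_α` into its tangential part `∑ γ, Γ^γ_{αβ} g_γ` and a normal part `II_{αβ}`.
Differentiating the splitting along `q^δ` and pairing with `g_ρ` gives
`⟨∂_δ ∂_β g_α, g_ρ⟩ = ∑ γ, g_{γρ} (∂_δ Γ^γ_{αβ} + ∑ λ, Γ^λ_{αβ} Γ^γ_{λδ}) - ⟨II_{αβ}, II_{ρδ}⟩`,
the last term because `⟨II_{αβ}, g_ρ⟩ = 0` near the point. The left side is symmetric in `β, δ`,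
so antisymmetrizing yields the Gauss equation in any codimension; for a hypersurface with unit
normal `n`, moreover, `II_{αβ} = τ_{αβ} n`.
-/

section MatrixCalculus

variable {𝕜 E ι : Type*} [NontriviallyNormedField 𝕜] [NormedAddCommGroup E] [NormedSpace 𝕜 E]
  [Fintype ι] [DecidableEq ι] {A : E → Matrix ι ι 𝕜} {k : WithTop ℕ∞} {x : E}

theorem contDiffAt_matrix_det (hA : ∀ i j, ContDiffAt 𝕜 k (fun y => A y i j) x) :
    ContDiffAt 𝕜 k (fun y => (A y).det) x := by
  simp only [Matrix.det_apply']
  exact ContDiffAt.sum fun σ _ => contDiffAt_const.mul (contDiffAt_prod fun i _ => hA (σ i) i)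

theorem contDiffAt_matrix_adjugate_apply (hA : ∀ i j, ContDiffAt 𝕜 k (fun y => A y i j) x)
    (i j : ι) : ContDiffAt 𝕜 k (fun y => (A y).adjugate i j) x := by
  simp only [Matrix.adjugate_apply]
  refine contDiffAt_matrix_det fun a b => ?_
  simp only [Matrix.updateRow_apply]
  split_ifs
  · exact contDiffAt_const
  · exact hA a b

theorem contDiffAt_matrix_inv_apply
    (hA : ∀ i j, ContDiffAt 𝕜 k (fun y => A y i j) x) (hdet : (A x).det ≠ 0) (i j : ι) :
    ContDiffAt 𝕜 k (fun y => (A y)⁻¹ i j) x := by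
  simp only [Matrix.inv_def, Ring.inverse_eq_inv', Matrix.smul_apply, smul_eq_mul]
  exact ((contDiffAt_matrix_det hA).inv hdet).mul (contDiffAt_matrix_adjugate_apply hA i j)

end MatrixCalculus

theorem eq_inner_smul_of_orthogonal_hyperplane {E ι : Type*} [NormedAddCommGroup E]
    [InnerProductSpace ℝ E] [Fintype ι] {g : ι → E}
    (hg : LinearIndependent ℝ g) (hcard : Module.finrank ℝ E = Fintype.card ι + 1) {n v : E}
    (hunit : ‖n‖ = 1) (hn : ∀ i, ⟪n, g i⟫ = 0) (hv : ∀ i, ⟪v, g i⟫ = 0) :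
    v = ⟪v, n⟫ • n := by
  have : FiniteDimensional ℝ E := Module.finite_of_finrank_eq_succ hcard
  have mem_orthogonal {w : E} (hw : ∀ i, ⟪w, g i⟫ = 0) :
      w ∈ (Submodule.span ℝ (Set.range g))ᗮ := by
    have hspan : Submodule.span ℝ (Set.range g) ≤ (Submodule.span ℝ {w})ᗮ :=
      Submodule.span_le.2 <| Set.range_subset_iff.2 fun i =>
        Submodule.mem_orthogonal_singleton_iff_inner_right.2 (hw i)
    exact (Submodule.mem_orthogonal' _ _).2 fun u hu =>
      Submodule.mem_orthogonal_singleton_iff_inner_right.1 (hspan hu)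
  have hline : Module.finrank ℝ (Submodule.span ℝ (Set.range g))ᗮ = 1 :=
    Submodule.finrank_add_finrank_orthogonal' (by rw [finrank_span_eq_card hg, hcard])
  have hn0 : (⟨n, mem_orthogonal hn⟩ : (Submodule.span ℝ (Set.range g))ᗮ) ≠ 0 := by
    intro h
    have : n = 0 := congrArg Subtype.val h
    simp [this] at hunit
  obtain ⟨c, hc⟩ := exists_smul_eq_of_finrank_eq_one hline hn0 ⟨v, mem_orthogonal hv⟩
  have hcv : c • n = v := congrArg Subtype.val hc
  rw [← hcv, real_inner_smul_left, real_inner_self_eq_norm_sq, hunit, one_pow, mul_one]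

section PartialDerivatives

variable {M N : ℕ} {f g : EuclideanSpace ℝ (Fin M) → EuclideanSpace ℝ (Fin N)}
  {x : EuclideanSpace ℝ (Fin M)}

theorem contDiffAt_pdv {k : WithTop ℕ∞} (hf : ContDiffAt ℝ (k + 1) f x) (α : Fin M) :
    ContDiffAt ℝ k (pdv f α) x :=
  (hf.fderiv_right le_rfl).clm_apply contDiffAt_const

theorem pdv_comm (hf : ContDiffAt ℝ 2 f x) (α β : Fin M) :
    pdv (pdv f α) β x = pdv (pdv f β) α x := by
  have hd : DifferentiableAt ℝ (fderiv ℝ f) x :=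
    (hf.fderiv_right (m := 1) (by norm_num)).differentiableAt one_ne_zero
  have pdv_pdv (a b : Fin M) : pdv (pdv f a) b x =
      fderiv ℝ (fderiv ℝ f) x (EuclideanSpace.single b 1) (EuclideanSpace.single a 1) := by
    change fderiv ℝ (fun y => fderiv ℝ f y (EuclideanSpace.single a 1)) x _ = _
    rw [fderiv_clm_apply hd (differentiableAt_const _)]
    simp
  rw [pdv_pdv, pdv_pdv]
  exact hf.isSymmSndFDerivAt (by simp) _ _

theorem pdv_add (hf : DifferentiableAt ℝ f x) (hg : DifferentiableAt ℝ g x) (α : Fin M) :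
    pdv (fun y => f y + g y) α x = pdv f α x + pdv g α x := by
  simp only [pdv, fderiv_fun_add hf hg, add_apply]

theorem pdv_sum_smul {ι : Type*} [Fintype ι] {c : ι → EuclideanSpace ℝ (Fin M) → ℝ}
    {v : ι → EuclideanSpace ℝ (Fin M) → EuclideanSpace ℝ (Fin N)}
    (hc : ∀ i, DifferentiableAt ℝ (c i) x) (hv : ∀ i, DifferentiableAt ℝ (v i) x) (α : Fin M) :
    pdv (fun y => ∑ i, c i y • v i y) α x =
      ∑ i, (pds (c i) α x • v i x + c i x • pdv (v i) α x) := by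
  simp only [pdv, pds]
  rw [fderiv_fun_sum fun i _ => (hc i).fun_smul (hv i), sum_apply]
  refine Finset.sum_congr rfl fun i _ => ?_
  rw [fderiv_fun_smul (hc i) (hv i)]
  simp [add_comm]

theorem inner_pdv_left_eq_neg_of_eventually_inner_eq_zero (hf : DifferentiableAt ℝ f x)
    (hg : DifferentiableAt ℝ g x) (hfg : ∀ᶠ y in nhds x, ⟪f y, g y⟫ = 0) (α : Fin M) :
    ⟪pdv f α x, g x⟫ = -⟪f x, pdv g α x⟫ := by
  have hzero : fderiv ℝ (fun y => ⟪f y, g y⟫) x = 0 :=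
    (Filter.EventuallyEq.fderiv_eq hfg).trans (fderiv_const_apply 0)
  have hderiv := fderiv_inner_apply ℝ hf hg (EuclideanSpace.single α 1)
  rw [hzero, zero_apply] at hderiv
  exact eq_neg_of_add_eq_zero_right hderiv.symm

end PartialDerivatives

/-- The vector-valued second fundamental form `II_{αβ} = ∂_β g_α - ∑ γ, Γ^γ_{αβ} g_γ`, that is, the
component of `∂_β g_α` normal to the tangent space wherever the `g_γ` are linearly independent. -/
def normalPart {M N : ℕ} (r : EuclideanSpace ℝ (Fin M) → EuclideanSpace ℝ (Fin N))
    (α β : Fin M) (x : EuclideanSpace ℝ (Fin M)) : EuclideanSpace ℝ (Fin N) :=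
  pdv (gvec r α) β x - ∑ γ, Γ2 r γ α β x • gvec r γ x

section Immersion

variable {M N : ℕ} {r : EuclideanSpace ℝ (Fin M) → EuclideanSpace ℝ (Fin N)}
  {x : EuclideanSpace ℝ (Fin M)} {k : WithTop ℕ∞}

theorem gmat_comm (r : EuclideanSpace ℝ (Fin M) → EuclideanSpace ℝ (Fin N))
    (x : EuclideanSpace ℝ (Fin M)) (α β : Fin M) : gmat r x α β = gmat r x β α :=
  real_inner_comm (gvec r β x) (gvec r α x)

theorem det_gmat_ne_zero (himm : LinearIndependent ℝ fun α => gvec r α x) :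
    (gmat r x).det ≠ 0 :=
  (Matrix.posDef_gram_of_linearIndependent (𝕜 := ℝ) himm).det_pos.ne'

theorem contDiffAt_gvec (hr : ContDiffAt ℝ (k + 1) r x) (α : Fin M) :
    ContDiffAt ℝ k (gvec r α) x :=
  contDiffAt_pdv hr α

theorem contDiffAt_gmat_apply (hr : ContDiffAt ℝ (k + 1) r x) (α β : Fin M) :
    ContDiffAt ℝ k (fun y => gmat r y α β) x :=
  (contDiffAt_gvec hr α).inner ℝ (contDiffAt_gvec hr β)

theorem eventually_det_gmat_ne_zero (hr : ContDiffAt ℝ 1 r x) (hdet : (gmat r x).det ≠ 0) :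
    ∀ᶠ y in nhds x, (gmat r y).det ≠ 0 :=
  (contDiffAt_matrix_det (contDiffAt_gmat_apply (k := 0) (by simpa using hr))).continuousAt
    |>.eventually_ne hdet

theorem contDiffAt_Γ2 (hr : ContDiffAt ℝ (k + 1 + 1) r x) (hdet : (gmat r x).det ≠ 0)
    (γ α β : Fin M) : ContDiffAt ℝ k (Γ2 r γ α β) x := by
  have hr' : ContDiffAt ℝ (k + 1) r x := hr.of_le le_self_add
  exact ContDiffAt.sum fun lam _ =>
    (contDiffAt_matrix_inv_apply (contDiffAt_gmat_apply hr') hdet γ lam).mul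
      ((contDiffAt_pdv (contDiffAt_gvec hr α) β).inner ℝ (contDiffAt_gvec hr' lam))

theorem contDiffAt_normalPart (hr : ContDiffAt ℝ (k + 1 + 1) r x) (hdet : (gmat r x).det ≠ 0)
    (α β : Fin M) : ContDiffAt ℝ k (normalPart r α β) x :=
  (contDiffAt_pdv (contDiffAt_gvec hr α) β).sub <| ContDiffAt.sum fun γ _ =>
    (contDiffAt_Γ2 hr hdet γ α β).smul (contDiffAt_gvec (hr.of_le le_self_add) γ)

theorem sum_gmat_mul_Γ2 (hdet : (gmat r x).det ≠ 0) (ρ α β : Fin M) :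
    ∑ γ, gmat r x ρ γ * Γ2 r γ α β x = ⟪pdv (gvec r α) β x, gvec r ρ x⟫ := by
  let b : Fin M → ℝ := fun lam => ⟪pdv (gvec r α) β x, gvec r lam x⟫
  have hinv : (gmat r x).mulVec ((gmat r x)⁻¹.mulVec b) = b := by
    rw [Matrix.mulVec_mulVec, Matrix.mul_nonsing_inv _ (isUnit_iff_ne_zero.mpr hdet),
      Matrix.one_mulVec]
  exact congrFun hinv ρ

theorem inner_normalPart_gvec (hdet : (gmat r x).det ≠ 0) (α β ρ : Fin M) :
    ⟪normalPart r α β x, gvec r ρ x⟫ = 0 := by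
  rw [normalPart, inner_sub_left, sum_inner, ← sum_gmat_mul_Γ2 hdet, sub_eq_zero]
  refine Finset.sum_congr rfl fun γ _ => ?_
  rw [real_inner_smul_left, gmat_comm, mul_comm]
  rfl

theorem pdv_gvec_eq_sum_add_normalPart (α β : Fin M) (x : EuclideanSpace ℝ (Fin M)) :
    pdv (gvec r α) β x = ∑ γ, Γ2 r γ α β x • gvec r γ x + normalPart r α β x :=
  (add_sub_cancel _ _).symm

theorem inner_normalPart_pdv_gvec (hdet : (gmat r x).det ≠ 0) (α β ρ δ : Fin M) :
    ⟪normalPart r α β x, pdv (gvec r ρ) δ x⟫ = ⟪normalPart r α β x, normalPart r ρ δ x⟫ := by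
  simp only [pdv_gvec_eq_sum_add_normalPart ρ δ, inner_add_right, inner_sum,
    real_inner_smul_right, inner_normalPart_gvec hdet, mul_zero, Finset.sum_const_zero, zero_add]

theorem inner_pdv_normalPart_gvec (hr : ContDiffAt ℝ 3 r x) (hdet : (gmat r x).det ≠ 0)
    (α β δ ρ : Fin M) :
    ⟪pdv (normalPart r α β) δ x, gvec r ρ x⟫ = -⟪normalPart r α β x, normalPart r ρ δ x⟫ := by
  have hnormal : DifferentiableAt ℝ (normalPart r α β) x :=
    (contDiffAt_normalPart (k := 1) (by norm_num [hr]) hdet α β).differentiableAt one_ne_zero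
  have hgvec : DifferentiableAt ℝ (gvec r ρ) x :=
    (contDiffAt_gvec (k := 2) (by norm_num [hr]) ρ).differentiableAt two_ne_zero
  have horth : ∀ᶠ y in nhds x, ⟪normalPart r α β y, gvec r ρ y⟫ = 0 :=
    (eventually_det_gmat_ne_zero (hr.of_le (by norm_num)) hdet).mono fun y hy =>
      inner_normalPart_gvec hy α β ρ
  rw [inner_pdv_left_eq_neg_of_eventually_inner_eq_zero hnormal hgvec horth,
    inner_normalPart_pdv_gvec hdet]

theorem pdv_pdv_gvec (hr : ContDiffAt ℝ 3 r x) (hdet : (gmat r x).det ≠ 0) (α β δ : Fin M) :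
    pdv (pdv (gvec r α) β) δ x =
      ∑ γ, (pds (Γ2 r γ α β) δ x • gvec r γ x + Γ2 r γ α β x • pdv (gvec r γ) δ x) +
        pdv (normalPart r α β) δ x := by
  have hr' : ContDiffAt ℝ (1 + 1 + 1) r x := by norm_num [hr]
  have hΓ (γ : Fin M) : DifferentiableAt ℝ (Γ2 r γ α β) x :=
    (contDiffAt_Γ2 hr' hdet γ α β).differentiableAt one_ne_zero
  have hgvec (γ : Fin M) : DifferentiableAt ℝ (gvec r γ) x :=
    (contDiffAt_gvec hr' γ).differentiableAt (by norm_num)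
  have hnormal : DifferentiableAt ℝ (normalPart r α β) x :=
    (contDiffAt_normalPart hr' hdet α β).differentiableAt one_ne_zero
  have hsplit : pdv (gvec r α) β =
      fun y => ∑ γ, Γ2 r γ α β y • gvec r γ y + normalPart r α β y :=
    funext (pdv_gvec_eq_sum_add_normalPart α β)
  rw [hsplit, pdv_add (DifferentiableAt.fun_sum fun γ _ => (hΓ γ).fun_smul (hgvec γ)) hnormal,
    pdv_sum_smul hΓ hgvec]

theorem inner_pdv_pdv_gvec (hr : ContDiffAt ℝ 3 r x) (hdet : (gmat r x).det ≠ 0)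
    (ρ α β δ : Fin M) :
    ⟪pdv (pdv (gvec r α) β) δ x, gvec r ρ x⟫ =
      ∑ γ, gmat r x γ ρ * (pds (Γ2 r γ α β) δ x + ∑ lam, Γ2 r lam α β x * Γ2 r γ lam δ x) -
        ⟪normalPart r α β x, normalPart r ρ δ x⟫ := by
  have hΓΓ : ∑ lam, Γ2 r lam α β x * ⟪pdv (gvec r lam) δ x, gvec r ρ x⟫ =
      ∑ γ, gmat r x γ ρ * ∑ lam, Γ2 r lam α β x * Γ2 r γ lam δ x := by
    simp only [← sum_gmat_mul_Γ2 hdet, Finset.mul_sum]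
    rw [Finset.sum_comm]
    refine Finset.sum_congr rfl fun γ _ => Finset.sum_congr rfl fun lam _ => ?_
    rw [gmat_comm r x ρ γ]
    ring
  rw [pdv_pdv_gvec hr hdet, inner_add_left, inner_pdv_normalPart_gvec hr hdet, sum_inner,
    ← sub_eq_add_neg]
  simp only [inner_add_left, real_inner_smul_left, mul_add, Finset.sum_add_distrib, hΓΓ]
  simp only [gmat, Matrix.of_apply, mul_comm]

theorem Rcov_eq_inner_normalPart (hr : ContDiffAt ℝ 3 r x) (hdet : (gmat r x).det ≠ 0)
    (ρ α δ β : Fin M) :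
    Rcov r ρ α δ β x = ⟪normalPart r α β x, normalPart r ρ δ x⟫ -
      ⟪normalPart r α δ x, normalPart r ρ β x⟫ := by
  have hcomm : pdv (pdv (gvec r α) β) δ x = pdv (pdv (gvec r α) δ) β x :=
    pdv_comm (contDiffAt_gvec (by norm_num [hr]) α) β δ
  have hRcov : Rcov r ρ α δ β x =
      ∑ γ, gmat r x γ ρ * (pds (Γ2 r γ α β) δ x + ∑ lam, Γ2 r lam α β x * Γ2 r γ lam δ x) -
      ∑ γ, gmat r x γ ρ * (pds (Γ2 r γ α δ) β x + ∑ lam, Γ2 r lam α δ x * Γ2 r γ lam β x) := by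
    simp only [Rcov, Rmix, ← Finset.sum_sub_distrib]
    refine Finset.sum_congr rfl fun γ _ => ?_
    rw [Finset.sum_sub_distrib]
    ring
  have hβδ := inner_pdv_pdv_gvec hr hdet ρ α β δ
  have hδβ := inner_pdv_pdv_gvec hr hdet ρ α δ β
  rw [← hcomm] at hδβ
  linear_combination hRcov - hβδ + hδβ

end Immersion

section Hypersurface

variable {M : ℕ} {r : EuclideanSpace ℝ (Fin M) → EuclideanSpace ℝ (Fin (M + 1))}
  {x : EuclideanSpace ℝ (Fin M)} {n : EuclideanSpace ℝ (Fin (M + 1))}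

theorem normalPart_eq_inner_smul (himm : LinearIndependent ℝ fun α => gvec r α x)
    (hunit : ‖n‖ = 1) (hperp : ∀ α, ⟪n, gvec r α x⟫ = 0) (α β : Fin M) :
    normalPart r α β x = ⟪pdv (gvec r α) β x, n⟫ • n := by
  have hperp' (γ : Fin M) : ⟪gvec r γ x, n⟫ = 0 := by rw [real_inner_comm, hperp]
  have hinner : ⟪normalPart r α β x, n⟫ = ⟪pdv (gvec r α) β x, n⟫ := by
    simp [normalPart, inner_sub_left, sum_inner, real_inner_smul_left, hperp']
  rw [← hinner]
  exact eq_inner_smul_of_orthogonal_hyperplane himm (by simp) hunit hperp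
    (inner_normalPart_gvec (det_gmat_ne_zero himm) α β)

theorem Rcov_eq_of_unit_normal (hr : ContDiffAt ℝ 3 r x)
    (himm : LinearIndependent ℝ fun α => gvec r α x)
    (hunit : ‖n‖ = 1) (hperp : ∀ α, ⟪n, gvec r α x⟫ = 0) (ρ α δ β : Fin M) :
    Rcov r ρ α δ β x =
      ⟪pdv (gvec r α) β x, n⟫ * ⟪pdv (gvec r ρ) δ x, n⟫ -
        ⟪pdv (gvec r α) δ x, n⟫ * ⟪pdv (gvec r ρ) β x, n⟫ := by
  rw [Rcov_eq_inner_normalPart hr (det_gmat_ne_zero himm)]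
  simp only [normalPart_eq_inner_smul himm hunit hperp, real_inner_smul_left,
    real_inner_smul_right, real_inner_self_eq_norm_sq, hunit]
  ring

end Hypersurface

theorem gaussian_curvature_eq_R1212_div_det_general
    {r : EuclideanSpace ℝ (Fin 2) → EuclideanSpace ℝ (Fin 3)} {x : EuclideanSpace ℝ (Fin 2)}
    (hr : ContDiffAt ℝ 3 r x) (himm : LinearIndependent ℝ fun α => gvec r α x)
    {n : EuclideanSpace ℝ (Fin 3)} (hunit : ‖n‖ = 1) (hperp : ∀ α, ⟪n, gvec r α x⟫ = 0)
    {τ : Fin 2 → Fin 2 → ℝ} (hτ : ∀ α β, τ α β = ⟪pdv (gvec r α) β x, n⟫) :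
    Rcov r 0 1 0 1 x = τ 0 0 * τ 1 1 - (τ 0 1) ^ 2 ∧
      Matrix.det (Matrix.of τ) / Matrix.det (gmat r x) =
        Rcov r 0 1 0 1 x / Matrix.det (gmat r x) := by
  have hτ_symm : τ 1 0 = τ 0 1 := by
    rw [hτ, hτ]
    exact congrArg (⟪·, n⟫) (pdv_comm (hr.of_le (by norm_num)) 1 0)
  have hgauss : Rcov r 0 1 0 1 x = τ 0 0 * τ 1 1 - (τ 0 1) ^ 2 := by
    rw [Rcov_eq_of_unit_normal hr himm hunit hperp]
    simp only [← hτ, hτ_symm]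
    ring
  refine ⟨hgauss, ?_⟩
  rw [hgauss, Matrix.det_fin_two]
  simp only [Matrix.of_apply, hτ_symm, sq]

/-- for a `C³` immersion `r : U → ℝ³` on an open `U ⊆ ℝ²` with smooth unit
normal `n`, and second fundamental form `τ_{αβ} = ⟨∂²_{q^β q^α} r, n⟩`, one has
`R₁₂₁₂ = τ₁₁ τ₂₂ - τ₁₂²` (0-based: `Rcov r 0 1 0 1`), and consequently the Gaussian
curvature `κ = det τ / det g` satisfies `κ = R₁₂₁₂ / det g`. -/
theorem gaussian_curvature_eq_R1212_div_det {U : Set (EuclideanSpace ℝ (Fin 2))}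
    (hU : IsOpen U)
    (r : EuclideanSpace ℝ (Fin 2) → EuclideanSpace ℝ (Fin 3))
    (hr : ContDiffOn ℝ 3 r U)
    (himm : ∀ x ∈ U, LinearIndependent ℝ fun α => gvec r α x)
    (n : EuclideanSpace ℝ (Fin 2) → EuclideanSpace ℝ (Fin 3))
    (hn : ContDiffOn ℝ (⊤ : ℕ∞) n U)
    (hunit : ∀ x ∈ U, ‖n x‖ = 1)
    (hperp : ∀ x ∈ U, ∀ α : Fin 2, ⟪n x, gvec r α x⟫ = 0)
    (τ : Fin 2 → Fin 2 → EuclideanSpace ℝ (Fin 2) → ℝ)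
    (hτ : ∀ α β x, τ α β x = ⟪pdv (gvec r α) β x, n x⟫) :
    ∀ x ∈ U,
      Rcov r 0 1 0 1 x = τ 0 0 x * τ 1 1 x - (τ 0 1 x) ^ 2 ∧
      Matrix.det (Matrix.of fun α β : Fin 2 => τ α β x) / Matrix.det (gmat r x) =
        Rcov r 0 1 0 1 x / Matrix.det (gmat r x) := by
  exact fun x hx => gaussian_curvature_eq_R1212_div_det_general
    (hr.contDiffAt (hU.mem_nhds hx)) (himm x hx) (hunit x hx) (hperp x hx) (fun α β => hτ α β x)

end
end

section
/- (Chiò pivotal condensation, diagonal pivot.) Let R be a commutative ring, n ≥ 2, and A an n×n matrix over R (indices 0,…,n−1). Define the (n−1)×(n−1) condensed matrix B by B_{ij} = A_{00} A_{ij} − A_{i0} A_{0j} for i, j ∈ {1,…,n−1}. Then det B = A_{00}^{n−2} · det A. -/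
/-!
Write `A` in block form `[a, r; c, D]`, so that the condensed matrix is `a • D - c * r`, the Schur
complement of the entry `1` in `[1, r; c, a • D]`. Expanding the determinant of the latter along
its first column, the minor `a • D` contributes `a ^ (m + 1) * det D`, and every other minor
consists of the row `r` and `m` rows of `a • D`. Taking out `a ^ m` leaves exactly the expansion of
`det A`. No division by `a` occurs, so `a` may be a zero divisor.
-/

section Bordered

open Matrix

variable {R : Type*} {m n : ℕ}

/-- The block matrix `[x, r; c, D]`: `D` bordered by a new first row and a new first column. It is
the analogue of `Matrix.fromBlocks` indexed by `Fin (n + 1)`, so that Laplace expansion applies. -/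
def bordered (x : R) (r c : Fin n → R) (D : Matrix (Fin n) (Fin n) R) :
    Matrix (Fin (n + 1)) (Fin (n + 1)) R :=
  of (vecCons (vecCons x r) fun i => vecCons (c i) (D.row i))

theorem bordered_eta (A : Matrix (Fin (n + 1)) (Fin (n + 1)) R) :
    bordered (A 0 0) (fun j => A 0 j.succ) (fun i => A i.succ 0)
      (A.submatrix Fin.succ Fin.succ) = A := by
  ext i j
  cases i using Fin.cases <;> cases j using Fin.cases <;> rfl

theorem submatrix_vecCons_succ_succAbove (r : Fin n → R) (D : Matrix (Fin (m + 1)) (Fin n) R)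
    (i : Fin (m + 1)) :
    (of (vecCons r D.row)).submatrix i.succ.succAbove id =
      of (vecCons r (D.submatrix i.succAbove id).row) := by
  ext k j
  cases k using Fin.cases <;> simp

variable [CommRing R]

theorem det_bordered (x : R) (r c : Fin n → R) (D : Matrix (Fin n) (Fin n) R) :
    (bordered x r c D).det = x * D.det + ∑ i : Fin n, (-1) ^ (i + 1 : ℕ) * c i *
      ((of (vecCons r D.row)).submatrix i.succ.succAbove id).det := by
  have minor_eq (i : Fin (n + 1)) : (bordered x r c D).submatrix i.succAbove Fin.succ =
      (of (vecCons r D.row)).submatrix i.succAbove id := by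
    ext k j
    simp only [submatrix_apply]
    cases i.succAbove k using Fin.cases <;> rfl
  have minor_zero : (of (vecCons r D.row)).submatrix (Fin.succAbove 0) id = D := by
    ext k j
    simp
  simp only [det_succ_column_zero, Fin.sum_univ_succ, minor_eq, minor_zero]
  simp [bordered]

theorem det_bordered_zero_column (x : R) (r : Fin n → R) (D : Matrix (Fin n) (Fin n) R) :
    (bordered x r 0 D).det = x * D.det := by
  simp [det_bordered]

theorem det_bordered_one (r c : Fin n → R) (D : Matrix (Fin n) (Fin n) R) :
    (bordered 1 r c D).det = (D - vecMulVec c r).det := by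
  have row_reduction : (bordered 1 r c D).det = (bordered 1 r 0 (D - vecMulVec c r)).det := by
    refine det_eq_of_forall_row_eq_smul_add_const (vecCons 0 c) 0 rfl fun i j => ?_
    cases i using Fin.cases <;> cases j using Fin.cases <;> simp [bordered, vecMulVec_apply]
  rw [row_reduction, det_bordered_zero_column, one_mul]

theorem det_vecCons_smul (t : R) (r : Fin (m + 1) → R) (D : Matrix (Fin m) (Fin (m + 1)) R) :
    (of (vecCons r (t • D).row)).det = t ^ m * (of (vecCons r D.row)).det := by
  have scaled_rows : of (vecCons r (t • D).row) =
      of fun i j => (vecCons 1 fun _ => t) i * of (vecCons r D.row) i j := by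
    ext i j
    cases i using Fin.cases <;> simp
  rw [scaled_rows, det_mul_column, Fin.prod_univ_succ]
  simp

theorem det_bordered_smul (t x : R) (r c : Fin (m + 1) → R)
    (D : Matrix (Fin (m + 1)) (Fin (m + 1)) R) :
    (bordered x r c (t • D)).det = t ^ m * (bordered (t * x) r c D).det := by
  simp only [det_bordered, submatrix_vecCons_succ_succAbove, submatrix_smul, Pi.smul_apply,
    det_vecCons_smul, det_smul, Fintype.card_fin, mul_add, Finset.mul_sum]
  congr 1
  · ring
  · exact Finset.sum_congr rfl fun i _ => by ring

end Bordered

/-- Chiò pivotal condensation, diagonal pivot: for an `n × n` matrix `A`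
over a commutative ring with `n = m + 2 ≥ 2`, the `(n-1) × (n-1)` condensed matrix
`B i j = A 0 0 * A i j - A i 0 * A 0 j` (rows and columns other than the `0`-th)
satisfies `det B = A 0 0 ^ (n - 2) * det A`. -/
theorem chio_condensation_diagonal_pivot {R : Type*} [CommRing R] {m : ℕ}
    (A : Matrix (Fin (m + 2)) (Fin (m + 2)) R)
    (B : Matrix (Fin (m + 1)) (Fin (m + 1)) R)
    (hB : ∀ i j : Fin (m + 1),
      B i j = A 0 0 * A i.succ j.succ - A i.succ 0 * A 0 j.succ) :
    B.det = A 0 0 ^ m * A.det := by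
  let r : Fin (m + 1) → R := fun j => A 0 j.succ
  let c : Fin (m + 1) → R := fun i => A i.succ 0
  let D := A.submatrix Fin.succ Fin.succ
  have B_eq : B = A 0 0 • D - Matrix.vecMulVec c r := Matrix.ext hB
  calc
    B.det = (bordered 1 r c (A 0 0 • D)).det := by rw [B_eq, det_bordered_one]
    _ = A 0 0 ^ m * (bordered (A 0 0) r c D).det := by rw [det_bordered_smul, mul_one]
    _ = A 0 0 ^ m * A.det := by rw [bordered_eta]
end

section
/- (Chiò pivotal condensation, off-diagonal pivot.) Let R be a commutative ring, n ≥ 2, and A an n×n matrix over R (indices 0,…,n−1). Define the (n−1)×(n−1) matrix B indexed by rows i ∈ {1,…,n−1} and columns j ∈ {0,2,3,…,n−1} by B_{ij} = A_{01} A_{ij} − A_{i1} A_{0j}. Then det B = − A_{01}^{n−2} · det A. -/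
/-!
Multiplying every row of `A` other than the pivot row `p` by `a = A p q` and then subtracting
multiples of row `p` clears column `q` off the pivot. The row operations scale the determinant by
`a ^ (n - 1)`, while expanding the result along column `q` gives
`(-1) ^ (p + q) * a * det B`, with `B` the condensation. Comparing the two proves the formula up to
a factor `a`. This factor can be cancelled for the matrix of indeterminates over `ℤ`, and the
resulting polynomial identity specialises to every matrix over every commutative ring.
-/

open Matrix

section RowOperations

variable {n R : Type*} [Fintype n] [DecidableEq n] [CommRing R]

theorem det_updateRow_smul_sub_vecMulVec (A : Matrix n n R) (p : n) (a : R) (c : n → R) :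
    ((a • A - vecMulVec c (A p)).updateRow p (A p)).det =
      a ^ (Fintype.card n - 1) * A.det := by
  let scale : n → R := Function.update (fun _ => a) p 1
  calc
    _ = (of fun i j => scale i * A i j).det := by
      refine det_eq_of_forall_row_eq_smul_add_const (Function.update (-c) p 0) p (by simp)
        fun i j => ?_
      obtain rfl | hi := eq_or_ne i p
      · simp [scale]
      · simp [scale, hi, vecMulVec_apply, sub_eq_add_neg]
    _ = (∏ i, scale i) * A.det := det_mul_column scale A
    _ = a ^ (Fintype.card n - 1) * A.det := by
      simp [scale, Finset.prod_update_of_mem, Finset.card_sdiff]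

end RowOperations

section Condensation

variable {R S : Type*} [CommRing R] [CommRing S] {m : ℕ}

theorem det_eq_of_column_eq_zero_off_pivot (M : Matrix (Fin (m + 1)) (Fin (m + 1)) R)
    (p q : Fin (m + 1)) (hM : ∀ i, M (p.succAbove i) q = 0) :
    M.det = (-1) ^ (p + q : ℕ) * M p q * (M.submatrix p.succAbove q.succAbove).det := by
  rw [det_succ_column M q, Fin.sum_univ_succAbove _ p]
  simp [hM]

/-- The Chiò condensation of `A` with respect to the pivot entry `A p q`: the matrix of the
`2 × 2` minors of `A` containing the pivot. Its rows and columns are those of `A` other than `p`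
and `q`, enumerated in order by `p.succAbove` and `q.succAbove`; each minor is signed as if the
pivot stood in its upper left corner. -/
def chioCondensation (A : Matrix (Fin (m + 1)) (Fin (m + 1)) R) (p q : Fin (m + 1)) :
    Matrix (Fin m) (Fin m) R :=
  of fun i j => A p q * A (p.succAbove i) (q.succAbove j) -
    A (p.succAbove i) q * A p (q.succAbove j)

theorem chioCondensation_map (f : R →+* S) (A : Matrix (Fin (m + 1)) (Fin (m + 1)) R)
    (p q : Fin (m + 1)) :
    chioCondensation (A.map f) p q = (chioCondensation A p q).map f := by
  ext i j
  simp [chioCondensation]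

theorem pivot_mul_det_chioCondensation (A : Matrix (Fin (m + 1)) (Fin (m + 1)) R)
    (p q : Fin (m + 1)) :
    A p q * (chioCondensation A p q).det = (-1) ^ (p + q : ℕ) * (A p q ^ m * A.det) := by
  let C := (A p q • A - vecMulVec (fun i => A i q) (A p)).updateRow p (A p)
  have pivot_eq : C p q = A p q := by simp [C]
  have column_eq_zero (i : Fin m) : C (p.succAbove i) q = 0 := by
    simp [C, vecMulVec_apply, mul_comm]
  have submatrix_eq : C.submatrix p.succAbove q.succAbove = chioCondensation A p q := by
    ext i j
    simp [C, chioCondensation, vecMulVec_apply]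
  have det_eq_pow_mul : C.det = A p q ^ m * A.det := by
    simpa using det_updateRow_smul_sub_vecMulVec A p (A p q) (fun i => A i q)
  have det_eq_expansion := det_eq_of_column_eq_zero_off_pivot C p q column_eq_zero
  rw [pivot_eq, submatrix_eq, det_eq_pow_mul] at det_eq_expansion
  have sign_mul_self : (-1 : R) ^ (p + q : ℕ) * (-1) ^ (p + q : ℕ) = 1 := by simp [← mul_pow]
  rw [det_eq_expansion, mul_assoc, ← mul_assoc, sign_mul_self, one_mul]

theorem det_chioCondensation_of_isLeftRegular (A : Matrix (Fin (m + 2)) (Fin (m + 2)) R)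
    (p q : Fin (m + 2)) (hpq : IsLeftRegular (A p q)) :
    (chioCondensation A p q).det = (-1) ^ (p + q : ℕ) * (A p q ^ m * A.det) := by
  refine hpq ?_
  linear_combination pivot_mul_det_chioCondensation A p q

theorem chio_condensation_offdiagonal_pivot_general (A : Matrix (Fin (m + 2)) (Fin (m + 2)) R)
    (p q : Fin (m + 2)) :
    (chioCondensation A p q).det = (-1) ^ (p + q : ℕ) * (A p q ^ m * A.det) := by
  let X := mvPolynomialX (Fin (m + 2)) (Fin (m + 2)) ℤ
  obtain ⟨f, rfl⟩ : ∃ f : MvPolynomial (Fin (m + 2) × Fin (m + 2)) ℤ →+* R, X.map f = A :=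
    ⟨_, mvPolynomialX_mapMatrix_aeval ℤ A⟩
  have pivot_regular : IsLeftRegular (X p q) :=
    IsLeftCancelMulZero.mul_left_cancel_of_ne_zero (MvPolynomial.X_ne_zero (p, q))
  have generic_identity := congrArg f (det_chioCondensation_of_isLeftRegular X p q pivot_regular)
  simpa [chioCondensation_map, RingHom.map_det] using generic_identity

end Condensation

/-- Chiò pivotal condensation, off-diagonal pivot: for an `n × n` matrix `A`
over a commutative ring with `n = m + 2 ≥ 2`, the `(n-1) × (n-1)` matrix
`B i j = A 0 1 * A i j - A i 1 * A 0 j`, formed over the rows other than row `0`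
(via `Fin.succ`) and the columns other than column `1` (via `Fin.succAbove 1`),
satisfies `det B = - A 0 1 ^ (n - 2) * det A`. -/
theorem chio_condensation_offdiagonal_pivot {R : Type*} [CommRing R] {m : ℕ}
    (A : Matrix (Fin (m + 2)) (Fin (m + 2)) R)
    (B : Matrix (Fin (m + 1)) (Fin (m + 1)) R)
    (hB : ∀ i j : Fin (m + 1),
      B i j = A 0 1 * A i.succ ((1 : Fin (m + 2)).succAbove j)
            - A i.succ 1 * A 0 ((1 : Fin (m + 2)).succAbove j)) :
    B.det = - (A 0 1 ^ m * A.det) := by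
  obtain rfl : B = chioCondensation A 0 1 := by ext i j; simp [hB, chioCondensation]
  simpa using chio_condensation_offdiagonal_pivot_general A 0 1
end
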